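/- Entropy conservation law for the augmented adiabatic thermoelasticity system: Let ψ̂ be C² on ℝ^{19} × (0,∞) and define η̂ and ê as in the constitutive theory. Let (ξ, v, θ) : ℝ³ × ℝ⁺ → ℝ^{19} × ℝ³ × (0,∞) be a C² solution of the augmented adiabatic thermoelasticity system with heat supply r (a continuous function). Then pointwise ∂_t [ η̂(ξ(x,t), θ(x,t)) ] = r/θ. -/

import Mathlib

open Real MeasureTheory Filter Set Topology ENNReal NNReal

noncomputable section

abbrev Vec3 := Fin 3 → ℝ
abbrev Mat3 := Fin 3 → Fin 3 → ℝ
abbrev Xi := Mat3 × Mat3 × ℝ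
abbrev Idx := (Fin 3 × Fin 3) ⊕ ((Fin 3 × Fin 3) ⊕ Unit)
abbrev FullState := Xi × Vec3 × ℝ

/-- Levi-Civita symbol on three indices. -/
def eps3 (i j k : Fin 3) : ℝ :=
  if (i, j, k) = (0, 1, 2) ∨ (i, j, k) = (1, 2, 0) ∨ (i, j, k) = (2, 0, 1) then 1
  else if (i, j, k) = (2, 1, 0) ∨ (i, j, k) = (1, 0, 2) ∨ (i, j, k) = (0, 2, 1) then -1
  else 0

/-- Cofactor matrix (cof F)_{iα} = (1/2) ε_{ijk} ε_{αβγ} F_{jβ} F_{kγ}. -/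
def cof3 (F : Mat3) : Mat3 := fun i α =>
  (1/2) * ∑ j, ∑ k, ∑ β, ∑ γ, eps3 i j k * eps3 α β γ * F j β * F k γ

/-- det F = (1/6) ε_{ijk} ε_{αβγ} F_{iα} F_{jβ} F_{kγ}. -/
def det3 (F : Mat3) : ℝ :=
  (1/6) * ∑ i, ∑ j, ∑ k, ∑ α, ∑ β, ∑ γ,
    eps3 i j k * eps3 α β γ * F i α * F j β * F k γ

/-- The vector of null Lagrangians Φ(F) = (F, cof F, det F). -/
def Phi3 (F : Mat3) : Xi := (F, cof3 F, det3 F)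

/-- Component ξ^B of ξ ∈ ℝ^19. -/
def xiComp (ξ : Xi) : Idx → ℝ
  | .inl (i, α) => ξ.1 i α
  | .inr (.inl (i, α)) => ξ.2.1 i α
  | .inr (.inr _) => ξ.2.2

def updMat (F : Mat3) (i α : Fin 3) (s : ℝ) : Mat3 :=
  Function.update F i (Function.update (F i) α s)

/-- Update component B of ξ to value s. -/
def xiUpd (ξ : Xi) : Idx → ℝ → Xi
  | .inl (i, α), s => (updMat ξ.1 i α s, ξ.2)
  | .inr (.inl (i, α)), s => (ξ.1, updMat ξ.2.1 i α s, ξ.2.2)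
  | .inr (.inr _), s => (ξ.1, ξ.2.1, s)

/-- ∂Φ^B/∂F_{iα}(F). -/
def dPhi (B : Idx) (i α : Fin 3) (F : Mat3) : ℝ :=
  deriv (fun s => xiComp (Phi3 (updMat F i α s)) B) (F i α)

/-- Partial derivative ∂ψ̂/∂ξ^B of a function ψ̂(ξ, θ). -/
def dXi (B : Idx) (ψ : Xi → ℝ → ℝ) (ξ : Xi) (θ : ℝ) : ℝ :=
  deriv (fun s => ψ (xiUpd ξ B s) θ) (xiComp ξ B)

/-- Partial derivative ∂ψ̂/∂θ. -/
def dTh (ψ : Xi → ℝ → ℝ) (ξ : Xi) (θ : ℝ) : ℝ :=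
  deriv (fun s => ψ ξ s) θ

/-- η̂(ξ,θ) = −∂_θ ψ̂(ξ,θ). -/
def etaHat (ψ : Xi → ℝ → ℝ) (ξ : Xi) (θ : ℝ) : ℝ := -(dTh ψ ξ θ)

/-- ê(ξ,θ) = ψ̂(ξ,θ) − θ ∂_θ ψ̂(ξ,θ). -/
def eHat (ψ : Xi → ℝ → ℝ) (ξ : Xi) (θ : ℝ) : ℝ := ψ ξ θ - θ * dTh ψ ξ θ

/-- Spatial partial derivative ∂_α of a space-time field. -/
def pdx (α : Fin 3) (f : Vec3 → ℝ → ℝ) (x : Vec3) (t : ℝ) : ℝ :=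
  deriv (fun s => f (Function.update x α s) t) (x α)

/-- Time derivative ∂_t of a space-time field. -/
def pdt (f : Vec3 → ℝ → ℝ) (x : Vec3) (t : ℝ) : ℝ :=
  deriv (fun s => f x s) t

def mnorm (F : Mat3) : ℝ := Real.sqrt (∑ i, ∑ j, (F i j)^2)
def vnorm (v : Vec3) : ℝ := Real.sqrt (∑ i, (v i)^2)

/-- |ξ|_{p,q,r} = |F|^p + |ζ|^q + |w|^r. -/
def xiNorm (p q r : ℝ) (ξ : Xi) : ℝ :=
  mnorm ξ.1 ^ p + mnorm ξ.2.1 ^ q + |ξ.2.2| ^ r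

/-- The compact set Γ_{M,δ}. -/
def Gamma (M δ : ℝ) : Set FullState :=
  {U | mnorm U.1.1 ≤ M ∧ mnorm U.1.2.1 ≤ M ∧ |U.1.2.2| ≤ M ∧
       vnorm U.2.1 ≤ M ∧ δ ≤ U.2.2 ∧ U.2.2 ≤ M}

/-- Relative free energy ψ̂(ξ,θ|ξ̄,θ̄). -/
def psiRel (ψ : Xi → ℝ → ℝ) (ξ : Xi) (θ : ℝ) (ξ' : Xi) (θ' : ℝ) : ℝ :=
  ψ ξ θ - ψ ξ' θ' - (∑ B : Idx, dXi B ψ ξ' θ' * (xiComp ξ B - xiComp ξ' B))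
    + etaHat ψ ξ' θ' * (θ - θ')

/-- Relative entropy function η̂(ξ,θ|ξ̄,θ̄). -/
def etaRel (ψ : Xi → ℝ → ℝ) (ξ : Xi) (θ : ℝ) (ξ' : Xi) (θ' : ℝ) : ℝ :=
  etaHat ψ ξ θ - etaHat ψ ξ' θ'
    - (∑ B : Idx, dXi B (etaHat ψ) ξ' θ' * (xiComp ξ B - xiComp ξ' B))
    - dTh (etaHat ψ) ξ' θ' * (θ - θ')

/-- Relative stress (∂ψ̂/∂ξ^B)(ξ,θ|ξ̄,θ̄). -/
def dXiRel (B : Idx) (ψ : Xi → ℝ → ℝ) (ξ : Xi) (θ : ℝ) (ξ' : Xi) (θ' : ℝ) : ℝ :=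
  dXi B ψ ξ θ - dXi B ψ ξ' θ'
    - (∑ A : Idx, dXi A (dXi B ψ) ξ' θ' * (xiComp ξ A - xiComp ξ' A))
    - dTh (dXi B ψ) ξ' θ' * (θ - θ')

/-- Relative entropy I(ξ,v,θ|ξ̄,v̄,θ̄). -/
def relEnt (ψ : Xi → ℝ → ℝ) (ξ : Xi) (v : Vec3) (θ : ℝ)
    (ξ' : Xi) (v' : Vec3) (θ' : ℝ) : ℝ :=
  psiRel ψ ξ θ ξ' θ' + (1/2) * (∑ i, (v i - v' i)^2)
    + (etaHat ψ ξ θ - etaHat ψ ξ' θ') * (θ - θ')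

/-- ψ̂ is C³ on ℝ^19 × (0,∞). -/
def PsiC3 (ψ : Xi → ℝ → ℝ) : Prop :=
  ContDiffOn ℝ 3 (fun p : Xi × ℝ => ψ p.1 p.2) (Set.univ ×ˢ Set.Ioi (0:ℝ))

/-- ∇²_ξ ψ̂ > 0 and ∂_θ η̂ > 0. -/
def PsiConvex (ψ : Xi → ℝ → ℝ) : Prop :=
  ∀ ξ : Xi, ∀ θ : ℝ, 0 < θ →
    (∀ u : Idx → ℝ, u ≠ 0 →
      0 < ∑ A : Idx, ∑ B : Idx, dXi A (dXi B ψ) ξ θ * u A * u B) ∧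
    0 < dTh (etaHat ψ) ξ θ

def gradFnorm (ψ : Xi → ℝ → ℝ) (ξ : Xi) (θ : ℝ) : ℝ :=
  Real.sqrt (∑ i, ∑ α, (dXi (.inl (i, α)) ψ ξ θ)^2)
def gradZnorm (ψ : Xi → ℝ → ℝ) (ξ : Xi) (θ : ℝ) : ℝ :=
  Real.sqrt (∑ i, ∑ α, (dXi (.inr (.inl (i, α))) ψ ξ θ)^2)
def gradWnorm (ψ : Xi → ℝ → ℝ) (ξ : Xi) (θ : ℝ) : ℝ :=
  |dXi (.inr (.inr ())) ψ ξ θ|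

/-- The growth conditions (gr.con.1)-(gr.con.3). -/
def GrowthCond (ψ : Xi → ℝ → ℝ) (c p q r ℓ : ℝ) : Prop :=
  0 < c ∧
  (∀ ξ : Xi, ∀ θ : ℝ, 0 < θ →
    c * (xiNorm p q r ξ + θ ^ ℓ) - c ≤ eHat ψ ξ θ ∧
    eHat ψ ξ θ ≤ c * (xiNorm p q r ξ + θ ^ ℓ) + c) ∧
  (∀ ε : ℝ, 0 < ε → ∃ R : ℝ, ∀ ξ : Xi, ∀ θ : ℝ, 0 < θ →
    R < xiNorm p q r ξ + θ ^ ℓ →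
    gradFnorm ψ ξ θ + gradZnorm ψ ξ θ ^ (p/(p-1)) + gradWnorm ψ ξ θ ^ (p/(p-2))
      ≤ ε * (xiNorm p q r ξ + θ ^ ℓ)) ∧
  (∀ ε : ℝ, 0 < ε → ∃ R : ℝ, ∀ ξ : Xi, ∀ θ : ℝ, 0 < θ →
    R < xiNorm p q r ξ + θ ^ ℓ →
    |dTh ψ ξ θ| ≤ ε * (xiNorm p q r ξ + θ ^ ℓ))

/-- The augmented thermoviscoelasticity system with fields (Z, Q, r), at a point (x,t). -/
def AugSys (ψ : Xi → ℝ → ℝ) (ξf : Vec3 → ℝ → Xi) (vf : Vec3 → ℝ → Vec3)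
    (θf : Vec3 → ℝ → ℝ) (Z : Vec3 → ℝ → Mat3) (Q : Vec3 → ℝ → Vec3)
    (r : Vec3 → ℝ → ℝ) (x : Vec3) (t : ℝ) : Prop :=
  (∀ B : Idx, pdt (fun y s => xiComp (ξf y s) B) x t
      = ∑ α, pdx α (fun y s => ∑ i, dPhi B i α (ξf y s).1 * vf y s i) x t) ∧
  (∀ i, pdt (fun y s => vf y s i) x t
      = ∑ α, pdx α (fun y s =>
          ∑ B : Idx, dXi B ψ (ξf y s) (θf y s) * dPhi B i α (ξf y s).1) x t
        + ∑ α, pdx α (fun y s => Z y s i α) x t) ∧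
  (pdt (fun y s => (1/2) * (∑ i, (vf y s i)^2) + eHat ψ (ξf y s) (θf y s)) x t
      = ∑ α, pdx α (fun y s => ∑ i,
          (∑ B : Idx, dXi B ψ (ξf y s) (θf y s) * dPhi B i α (ξf y s).1) * vf y s i) x t
        + ∑ α, pdx α (fun y s => ∑ i, Z y s i α * vf y s i) x t
        + ∑ α, pdx α (fun y s => Q y s α) x t + r x t) ∧
  (∀ i α β, pdx α (fun y s => (ξf y s).1 i β) x t = pdx β (fun y s => (ξf y s).1 i α) x t)

/-- The entropy production identity for the augmented system. -/
def EntropyIdent (ψ : Xi → ℝ → ℝ) (ξf : Vec3 → ℝ → Xi) (vf : Vec3 → ℝ → Vec3)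
    (θf : Vec3 → ℝ → ℝ) (Z : Vec3 → ℝ → Mat3) (Q : Vec3 → ℝ → Vec3)
    (r : Vec3 → ℝ → ℝ) (x : Vec3) (t : ℝ) : Prop :=
  pdt (fun y s => etaHat ψ (ξf y s) (θf y s)) x t
    - ∑ α, pdx α (fun y s => Q y s α / θf y s) x t
  = (∑ α, pdx α θf x t * Q x t α) / (θf x t)^2
    + (∑ α, ∑ i, pdx α (fun y s => vf y s i) x t * Z x t i α) / θf x t
    + r x t / θf x t

/-- Newtonian viscous stress Z = μ ∇v. -/
def newtonianZ (μ : Mat3 → ℝ → ℝ) (ξf : Vec3 → ℝ → Xi) (vf : Vec3 → ℝ → Vec3)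
    (θf : Vec3 → ℝ → ℝ) : Vec3 → ℝ → Mat3 :=
  fun x t i α => μ (ξf x t).1 (θf x t) * pdx α (fun y s => vf y s i) x t

/-- Fourier heat flux Q = k ∇θ. -/
def fourierQ (k : Mat3 → ℝ → ℝ) (ξf : Vec3 → ℝ → Xi)
    (θf : Vec3 → ℝ → ℝ) : Vec3 → ℝ → Vec3 :=
  fun x t α => k (ξf x t).1 (θf x t) * pdx α θf x t

/-- The entropy identity for Newtonian viscosity and Fourier heat conduction (zero supply). -/
def EntropyIdentNF (ψ : Xi → ℝ → ℝ) (μ k : Mat3 → ℝ → ℝ) (ξf : Vec3 → ℝ → Xi)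
    (vf : Vec3 → ℝ → Vec3) (θf : Vec3 → ℝ → ℝ) (x : Vec3) (t : ℝ) : Prop :=
  pdt (fun y s => etaHat ψ (ξf y s) (θf y s)) x t
    - ∑ α, pdx α (fun y s =>
        k (ξf y s).1 (θf y s) * pdx α θf y s / θf y s) x t
  = k (ξf x t).1 (θf x t) * (∑ α, (pdx α θf x t)^2) / (θf x t)^2
    + μ (ξf x t).1 (θf x t) *
        (∑ α, ∑ i, (pdx α (fun y s => vf y s i) x t)^2) / θf x t

/-- Fundamental domain of the 3-torus. -/
def Box : Set Vec3 := Set.Icc 0 1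

/-- Periodicity in the space variables with period 1. -/
def PeriodicX {E : Type*} (f : Vec3 → ℝ → E) : Prop :=
  ∀ (x : Vec3) (t : ℝ) (α : Fin 3), f (x + Pi.single α 1) t = f x t

/-- C^n regularity of a space-time field. -/
def FieldC {E : Type*} [NormedAddCommGroup E] [NormedSpace ℝ E]
    (n : ℕ) (f : Vec3 → ℝ → E) : Prop :=
  ContDiff ℝ n (fun p : Vec3 × ℝ => f p.1 p.2)

/-- Spatial integral of the relative entropy at time t. -/
def relEntInt (ψ : Xi → ℝ → ℝ) (ξf : Vec3 → ℝ → Xi) (vf : Vec3 → ℝ → Vec3)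
    (θf : Vec3 → ℝ → ℝ) (ξf' : Vec3 → ℝ → Xi) (vf' : Vec3 → ℝ → Vec3)
    (θf' : Vec3 → ℝ → ℝ) (t : ℝ) : ℝ :=
  ∫ x in Box, relEnt ψ (ξf x t) (vf x t) (θf x t) (ξf' x t) (vf' x t) (θf' x t)


/-- Spatial partial derivative of a static field. -/
def pds (α : Fin 3) (f : Vec3 → ℝ) (x : Vec3) : ℝ :=
  deriv (fun s => f (Function.update x α s)) (x α)

/-- Deformation gradient ∇y of a static map y : ℝ³ → ℝ³. -/
def gradV (y : Vec3 → Vec3) (x : Vec3) : Mat3 :=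
  fun i α => pds α (fun z => y z i) x

/-- ∂ψ/∂F_{iα} for ψ = ψ(F,θ). -/
def dFM (i α : Fin 3) (ψ : Mat3 → ℝ → ℝ) (F : Mat3) (θ : ℝ) : ℝ :=
  deriv (fun s => ψ (updMat F i α s) θ) (F i α)

/-- ∂ψ/∂θ for ψ = ψ(F,θ). -/
def dThM (ψ : Mat3 → ℝ → ℝ) (F : Mat3) (θ : ℝ) : ℝ :=
  deriv (fun s => ψ F s) θ

/-- Index set for the full extended state U = (ξ, v, θ) ∈ ℝ²³. -/
abbrev UIdx := Idx ⊕ (Fin 3 ⊕ Unit)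

def uComp (U : FullState) : UIdx → ℝ
  | .inl B => xiComp U.1 B
  | .inr (.inl i) => U.2.1 i
  | .inr (.inr _) => U.2.2

def uUpd (U : FullState) : UIdx → ℝ → FullState
  | .inl B, s => (xiUpd U.1 B s, U.2)
  | .inr (.inl i), s => (U.1, Function.update U.2.1 i s, U.2.2)
  | .inr (.inr _), s => (U.1, U.2.1, s)

/-- Partial derivative in the state variables (ξ,v,θ). -/
def pdU (B : UIdx) (f : FullState → ℝ) (U : FullState) : ℝ :=
  deriv (fun s => f (uUpd U B s)) (uComp U B)

/-- Second partial derivative in the state variables (ξ,v,θ). -/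
def pdU2 (A B : UIdx) (f : FullState → ℝ) (U : FullState) : ℝ :=
  pdU A (fun V => pdU B f V) U

/-- Test functions for the weak formulation on T³ × [0,T):
C¹, periodic in x, compactly supported in time in [0,T). -/
def TestFun (T : ℝ) (φ : Vec3 → ℝ → ℝ) : Prop :=
  ContDiff ℝ 1 (fun p : Vec3 × ℝ => φ p.1 p.2) ∧ PeriodicX φ ∧
  ∃ T' : ℝ, T' < T ∧ ∀ (x : Vec3) (t : ℝ), T' ≤ t → φ x t = 0

/-- The elastic stress Σ_{iα} of the augmented constitutive theory. -/
def SigmaA (ψ : Xi → ℝ → ℝ) (ξ : Xi) (θ : ℝ) (i α : Fin 3) : ℝ :=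
  ∑ B : Idx, dXi B ψ ξ θ * dPhi B i α ξ.1

/-!
The Gibbs relation `de = ∂ψ/∂ξ · dξ + θ dη` turns the energy balance into an equation for `θ ∂_t η`.
The Levi-Civita symbol is antisymmetric while a curl-free `∇F` is symmetric in its last two indices,
so `∂_α (∂Φ/∂F_{iα}) = 0` (Piola identity) and the augmented kinematics reads `∂_t ξ = DΦ(F)∇v`.
Hence `∂ψ/∂ξ · ∂_t ξ` is the elastic stress power `Σ : ∇v`, which, together with the momentum
balance tested with `v`, cancels the elastic part of the energy balance and leaves
`θ ∂_t η = Z : ∇v + div Q + r`.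
-/

section LeviCivita

lemma eps3_swap_right (i j k : Fin 3) : eps3 i k j = -eps3 i j k := by
  fin_cases i <;> fin_cases j <;> fin_cases k <;> simp [eps3]

lemma eps3_swap_outer (i j k : Fin 3) : eps3 k j i = -eps3 i j k := by
  fin_cases i <;> fin_cases j <;> fin_cases k <;> simp [eps3]

lemma eps3_rotate (i j k : Fin 3) : eps3 j k i = eps3 i j k := by
  rw [eps3_swap_outer, eps3_swap_right, neg_neg]

lemma sum_sum_eq_zero_of_antisymm {ι M : Type*} [Fintype ι] [AddCommGroup M]
    [IsAddTorsionFree M] {f : ι → ι → M} (hf : ∀ a b, f b a = -f a b) :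
    ∑ a, ∑ b, f a b = 0 := by
  refine self_eq_neg.1 ?_
  calc ∑ a, ∑ b, f a b = ∑ b, ∑ a, f a b := Finset.sum_comm
    _ = -∑ a, ∑ b, f a b := by
      simp only [← Finset.sum_neg_distrib]
      exact Finset.sum_congr rfl fun a _ => Finset.sum_congr rfl fun b _ => hf a b

end LeviCivita

section TensorCross

/-- The tensor cross product `(F ⨯ G)_{iα} = ε_{ijk} ε_{αβγ} F_{jβ} G_{kγ}`, the polarization of
the quadratic map `2 cof`. -/
def tensorCross (F G : Mat3) : Mat3 := fun i α =>
  ∑ j, ∑ k, ∑ β, ∑ γ, eps3 i j k * eps3 α β γ * F j β * G k γ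

/-- The scalar triple product `F : (G ⨯ H)`, the polarization of the cubic map `6 det`. -/
def tensorTriple (F G H : Mat3) : ℝ :=
  ∑ i, ∑ j, ∑ k, ∑ α, ∑ β, ∑ γ, eps3 i j k * eps3 α β γ * F i α * G j β * H k γ

/-- The matrix unit `e_i ⊗ e_α`. -/
def matUnit (i α : Fin 3) : Mat3 := Pi.single i (Pi.single α 1)

lemma matUnit_apply (i α j β : Fin 3) :
    matUnit i α j β = (if j = i then 1 else 0) * (if β = α then 1 else 0) := by
  by_cases hj : j = i
  · subst hj
    simp [matUnit, Pi.single_apply]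
  · simp [matUnit, hj]

lemma sum_matUnit_mul (A : Mat3) (i α : Fin 3) :
    ∑ j, ∑ β, matUnit i α j β * A j β = A i α := by
  simp [matUnit_apply]

lemma sum_smul_matUnit (A : Mat3) : ∑ p : Fin 3 × Fin 3, A p.1 p.2 • matUnit p.1 p.2 = A := by
  funext j β
  simp [Fintype.sum_prod_type, matUnit_apply]

lemma tensorCross_comm (F G : Mat3) : tensorCross F G = tensorCross G F := by
  funext i α
  rw [tensorCross, Finset.sum_comm]
  refine Finset.sum_congr rfl fun k _ => Finset.sum_congr rfl fun j _ => ?_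
  rw [Finset.sum_comm]
  refine Finset.sum_congr rfl fun γ _ => Finset.sum_congr rfl fun β _ => ?_
  rw [eps3_swap_right i, eps3_swap_right α]
  ring

lemma cof3_eq_tensorCross (F : Mat3) : cof3 F = (1 / 2 : ℝ) • tensorCross F F := rfl

lemma det3_eq_tensorTriple (F : Mat3) : det3 F = 1 / 6 * tensorTriple F F F := rfl

lemma tensorTriple_eq_sum (F G H : Mat3) :
    tensorTriple F G H = ∑ i, ∑ α, F i α * tensorCross G H i α := by
  refine Finset.sum_congr rfl fun i _ => ?_
  simp only [tensorCross, Finset.mul_sum]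
  refine Eq.trans ?_ Finset.sum_comm_cycle
  refine Finset.sum_congr rfl fun j _ => Finset.sum_congr rfl fun k _ =>
    Finset.sum_congr rfl fun α _ => Finset.sum_congr rfl fun β _ =>
    Finset.sum_congr rfl fun γ _ => ?_
  ring

lemma tensorTriple_rotate (F G H : Mat3) : tensorTriple F G H = tensorTriple G H F := by
  rw [tensorTriple, ← Finset.sum_comm_cycle]
  refine Finset.sum_congr rfl fun j _ => Finset.sum_congr rfl fun k _ =>
    Finset.sum_congr rfl fun i _ => ?_
  rw [← Finset.sum_comm_cycle]
  refine Finset.sum_congr rfl fun β _ => Finset.sum_congr rfl fun γ _ =>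
    Finset.sum_congr rfl fun α _ => ?_
  rw [eps3_rotate i, eps3_rotate α]
  ring

lemma tensorCross_matUnit_right (G : Mat3) (i α j β : Fin 3) :
    tensorCross G (matUnit i α) j β = tensorCross (matUnit j β) G i α := calc
  tensorCross G (matUnit i α) j β = tensorTriple (matUnit j β) G (matUnit i α) := by
    rw [tensorTriple_eq_sum, sum_matUnit_mul]
  _ = tensorTriple (matUnit i α) (matUnit j β) G := (tensorTriple_rotate _ _ _).symm
  _ = tensorCross (matUnit j β) G i α := by rw [tensorTriple_eq_sum, sum_matUnit_mul]

lemma sum_tensorCross_eq_zero_of_symm (F : Mat3) {G : Fin 3 → Mat3}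
    (hG : ∀ k α γ, G α k γ = G γ k α) (i : Fin 3) : ∑ α, tensorCross F (G α) i α = 0 := by
  simp only [tensorCross]
  rw [Finset.sum_comm]
  refine Finset.sum_eq_zero fun j _ => ?_
  rw [Finset.sum_comm]
  refine Finset.sum_eq_zero fun k _ => ?_
  rw [Finset.sum_comm]
  refine Finset.sum_eq_zero fun β _ => sum_sum_eq_zero_of_antisymm fun α γ => ?_
  rw [eps3_swap_outer α, hG k γ α]
  ring

lemma hasDerivAt_tensorCross {F G : ℝ → Mat3} {F' G' : Mat3} {s : ℝ}
    (hF : HasDerivAt F F' s) (hG : HasDerivAt G G' s) :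
    HasDerivAt (fun u => tensorCross (F u) (G u))
      (tensorCross F' (G s) + tensorCross (F s) G') s := by
  have hentry {A : ℝ → Mat3} {A' : Mat3} (hA : HasDerivAt A A' s) (j β : Fin 3) :
      HasDerivAt (fun u => A u j β) (A' j β) s :=
    hasDerivAt_pi.1 (hasDerivAt_pi.1 hA j) β
  refine hasDerivAt_pi.2 fun i => hasDerivAt_pi.2 fun α => ?_
  refine (HasDerivAt.fun_sum fun j _ => HasDerivAt.fun_sum fun k _ =>
    HasDerivAt.fun_sum fun β _ => HasDerivAt.fun_sum fun γ _ =>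
      ((hentry hF j β).const_mul (eps3 i j k * eps3 α β γ)).mul (hentry hG k γ)).congr_deriv ?_
  simp only [Finset.sum_add_distrib, Pi.add_apply, tensorCross]

end TensorCross

section NullLagrangians

variable {F : ℝ → Mat3} {F' : Mat3} {s : ℝ}

lemma hasDerivAt_cof3 (hF : HasDerivAt F F' s) :
    HasDerivAt (fun u => cof3 (F u)) (tensorCross (F s) F') s := by
  refine ((hasDerivAt_tensorCross hF hF).const_smul (1 / 2 : ℝ)).congr_deriv ?_
  rw [tensorCross_comm F', ← two_smul ℝ, smul_smul]
  norm_num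

/-- Jacobi's formula. -/
lemma hasDerivAt_det3 (hF : HasDerivAt F F' s) :
    HasDerivAt (fun u => det3 (F u)) (∑ i, ∑ α, F' i α * cof3 (F s) i α) s := by
  have hsum : HasDerivAt (fun u => 1 / 6 * ∑ i, ∑ α, F u i α * tensorCross (F u) (F u) i α)
      (1 / 6 * ∑ i, ∑ α, (F' i α * tensorCross (F s) (F s) i α +
        F s i α * (tensorCross F' (F s) + tensorCross (F s) F') i α)) s :=
    (HasDerivAt.fun_sum fun i _ => HasDerivAt.fun_sum fun α _ =>
      (hasDerivAt_pi.1 (hasDerivAt_pi.1 hF i) α).mul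
        (hasDerivAt_pi.1 (hasDerivAt_pi.1 (hasDerivAt_tensorCross hF hF) i) α)).const_mul _
  simp only [← tensorTriple_eq_sum, ← det3_eq_tensorTriple] at hsum
  refine hsum.congr_deriv ?_
  simp only [Pi.add_apply, mul_add, Finset.sum_add_distrib, ← tensorTriple_eq_sum]
  rw [tensorTriple_rotate (F s) F', ← tensorTriple_rotate F', tensorTriple_eq_sum F']
  simp only [cof3_eq_tensorCross, Pi.smul_apply, smul_eq_mul, mul_left_comm _ (1 / 2 : ℝ),
    ← Finset.mul_sum]
  ring

/-- The differential `DΦ(F)G` of the vector of null Lagrangians. -/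
def Phi3Deriv (F G : Mat3) : Xi :=
  (G, tensorCross F G, ∑ i, ∑ α, G i α * cof3 F i α)

/-- The second differential `D²Φ(F)[G, H]` of the vector of null Lagrangians. -/
def Phi3Hess (F G H : Mat3) : Xi :=
  (0, tensorCross G H, ∑ i, ∑ α, H i α * tensorCross F G i α)

lemma hasDerivAt_Phi3 (hF : HasDerivAt F F' s) :
    HasDerivAt (fun u => Phi3 (F u)) (Phi3Deriv (F s) F') s :=
  hF.prodMk ((hasDerivAt_cof3 hF).prodMk (hasDerivAt_det3 hF))

lemma hasDerivAt_Phi3Deriv (hF : HasDerivAt F F' s) (H : Mat3) :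
    HasDerivAt (fun u => Phi3Deriv (F u) H) (Phi3Hess (F s) F' H) s := by
  have hcross : HasDerivAt (fun u => tensorCross (F u) H) (tensorCross F' H) s :=
    (hasDerivAt_tensorCross hF (hasDerivAt_const s H)).congr_deriv <| by
      funext i α
      simp [tensorCross]
  have hcof : HasDerivAt (fun u => ∑ i, ∑ α, H i α * cof3 (F u) i α)
      (∑ i, ∑ α, H i α * tensorCross (F s) F' i α) s :=
    HasDerivAt.fun_sum fun i _ => HasDerivAt.fun_sum fun α _ =>
      (hasDerivAt_pi.1 (hasDerivAt_pi.1 (hasDerivAt_cof3 hF) i) α).const_mul _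
  exact (hasDerivAt_const s H).prodMk (hcross.prodMk hcof)

lemma differentiable_Phi3Deriv (H : Mat3) : Differentiable ℝ (fun F => Phi3Deriv F H) := by
  unfold Phi3Deriv tensorCross cof3
  fun_prop

lemma sum_Phi3Hess_matUnit_eq_zero (F : Mat3) {G : Fin 3 → Mat3}
    (hG : ∀ k α γ, G α k γ = G γ k α) (i : Fin 3) :
    ∑ α, Phi3Hess F (G α) (matUnit i α) = 0 := by
  have hcof : ∑ α, tensorCross (G α) (matUnit i α) = 0 := by
    funext j β
    simp only [Finset.sum_apply, tensorCross_matUnit_right]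
    exact sum_tensorCross_eq_zero_of_symm _ hG i
  have hdet : ∑ α, ∑ j, ∑ β, matUnit i α j β * tensorCross F (G α) j β = 0 := by
    simp only [sum_matUnit_mul]
    exact sum_tensorCross_eq_zero_of_symm F hG i
  simp only [Phi3Hess, Prod.ext_iff, Prod.fst_sum, Prod.snd_sum, hcof, hdet,
    Finset.sum_const_zero, Prod.fst_zero, Prod.snd_zero, and_self]

end NullLagrangians

section StateSpace

/-- The basis vector of the state space `ℝ¹⁹` in the direction of the component `B`. -/
def xiUnit : Idx → Xi
  | .inl (i, α) => (matUnit i α, 0, 0)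
  | .inr (.inl (i, α)) => (0, matUnit i α, 0)
  | .inr (.inr _) => (0, 0, 1)

lemma sum_xiComp_smul_xiUnit (ξ : Xi) : ∑ B, xiComp ξ B • xiUnit B = ξ := by
  simp only [Fintype.sum_sum_type, xiComp, xiUnit, Prod.ext_iff, Prod.fst_add, Prod.snd_add,
    Prod.fst_sum, Prod.snd_sum, Prod.smul_fst, Prod.smul_snd, smul_zero,
    Finset.sum_const_zero, add_zero, zero_add, sum_smul_matUnit]
  simp

/-- The component `ξ ↦ ξ^B` as a continuous linear functional. -/
def xiCompL (B : Idx) : Xi →L[ℝ] ℝ :=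
  LinearMap.toContinuousLinearMap
    { toFun := fun ξ => xiComp ξ B
      map_add' := fun ξ ζ => by rcases B with _ | _ | _ <;> rfl
      map_smul' := fun c ξ => by rcases B with _ | _ | _ <;> rfl }

lemma hasDerivAt_xiComp {ξ : ℝ → Xi} {ξ' : Xi} {s : ℝ} (hξ : HasDerivAt ξ ξ' s) (B : Idx) :
    HasDerivAt (fun u => xiComp (ξ u) B) (xiComp ξ' B) s :=
  (xiCompL B).hasFDerivAt.comp_hasDerivAt s hξ

lemma updMat_self (F : Mat3) (i α : Fin 3) : updMat F i α (F i α) = F := by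
  simp [updMat]

lemma xiUpd_self (ξ : Xi) (B : Idx) : xiUpd ξ B (xiComp ξ B) = ξ := by
  rcases B with _ | _ | _ <;> simp [xiUpd, xiComp, updMat_self]

lemma hasDerivAt_updMat (F : Mat3) (i α : Fin 3) (s : ℝ) :
    HasDerivAt (updMat F i α) (matUnit i α) s := by
  refine ((hasFDerivAt_update F _).comp_hasDerivAt s (hasDerivAt_update (F i) α s)).congr_deriv ?_
  funext j
  by_cases hj : j = i
  · subst hj
    simp [matUnit]
  · simp [matUnit, hj]

lemma hasDerivAt_xiUpd (ξ : Xi) (B : Idx) (s : ℝ) :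
    HasDerivAt (xiUpd ξ B) (xiUnit B) s := by
  rcases B with ⟨i, α⟩ | ⟨i, α⟩ | _
  · exact (hasDerivAt_updMat ξ.1 i α s).prodMk (hasDerivAt_const s ξ.2)
  · exact (hasDerivAt_const s ξ.1).prodMk
      ((hasDerivAt_updMat ξ.2.1 i α s).prodMk (hasDerivAt_const s ξ.2.2))
  · exact (hasDerivAt_const s ξ.1).prodMk ((hasDerivAt_const s ξ.2.1).prodMk (hasDerivAt_id s))

lemma dPhi_eq_xiComp_Phi3Deriv (B : Idx) (i α : Fin 3) (F : Mat3) :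
    dPhi B i α F = xiComp (Phi3Deriv F (matUnit i α)) B := by
  have h := hasDerivAt_xiComp (hasDerivAt_Phi3 (hasDerivAt_updMat F i α (F i α))) B
  rw [updMat_self] at h
  exact h.deriv

lemma differentiable_dPhi (B : Idx) (i α : Fin 3) : Differentiable ℝ (dPhi B i α) := by
  rw [funext (dPhi_eq_xiComp_Phi3Deriv B i α)]
  exact (xiCompL B).differentiable.comp (differentiable_Phi3Deriv _)

lemma hasDerivAt_dPhi {F : ℝ → Mat3} {F' : Mat3} {s : ℝ} (hF : HasDerivAt F F' s)
    (B : Idx) (i α : Fin 3) :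
    HasDerivAt (fun u => dPhi B i α (F u)) (xiComp (Phi3Hess (F s) F' (matUnit i α)) B) s := by
  simp only [dPhi_eq_xiComp_Phi3Deriv]
  exact hasDerivAt_xiComp (hasDerivAt_Phi3Deriv hF _) B

end StateSpace

section ConstitutiveFunctions

variable {ψ : Xi → ℝ → ℝ} {ξ : Xi} {θ : ℝ}

lemma dXi_eq_fderiv (hψ : DifferentiableAt ℝ (fun p : Xi × ℝ => ψ p.1 p.2) (ξ, θ)) (B : Idx) :
    dXi B ψ ξ θ = fderiv ℝ (fun p : Xi × ℝ => ψ p.1 p.2) (ξ, θ) (xiUnit B, 0) := by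
  have hline : HasDerivAt (fun s => (xiUpd ξ B s, θ)) (xiUnit B, 0) (xiComp ξ B) :=
    (hasDerivAt_xiUpd ξ B _).prodMk (hasDerivAt_const _ θ)
  exact (hψ.hasFDerivAt.comp_hasDerivAt_of_eq _ hline (by rw [xiUpd_self])).deriv

lemma dTh_eq_fderiv (hψ : DifferentiableAt ℝ (fun p : Xi × ℝ => ψ p.1 p.2) (ξ, θ)) :
    dTh ψ ξ θ = fderiv ℝ (fun p : Xi × ℝ => ψ p.1 p.2) (ξ, θ) (0, 1) :=
  (hψ.hasFDerivAt.comp_hasDerivAt θ ((hasDerivAt_const θ ξ).prodMk (hasDerivAt_id θ))).deriv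

lemma differentiableAt_dXi (hψ : ContDiffAt ℝ 2 (fun p : Xi × ℝ => ψ p.1 p.2) (ξ, θ)) (B : Idx) :
    DifferentiableAt ℝ (fun p : Xi × ℝ => dXi B ψ p.1 p.2) (ξ, θ) := by
  have hfderiv := (hψ.fderiv_right (m := 1) (by norm_num)).differentiableAt one_ne_zero
  refine (hfderiv.clm_apply (differentiableAt_const (xiUnit B, 0))).congr_of_eventuallyEq ?_
  filter_upwards [hψ.eventually (by simp)] with p hp
  exact dXi_eq_fderiv (hp.differentiableAt two_ne_zero) B

lemma differentiableAt_dTh (hψ : ContDiffAt ℝ 2 (fun p : Xi × ℝ => ψ p.1 p.2) (ξ, θ)) :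
    DifferentiableAt ℝ (fun p : Xi × ℝ => dTh ψ p.1 p.2) (ξ, θ) := by
  have hfderiv := (hψ.fderiv_right (m := 1) (by norm_num)).differentiableAt one_ne_zero
  refine (hfderiv.clm_apply (differentiableAt_const (0, 1))).congr_of_eventuallyEq ?_
  filter_upwards [hψ.eventually (by simp)] with p hp
  exact dTh_eq_fderiv (hp.differentiableAt two_ne_zero)

lemma hasDerivAt_constitutive {ξ : ℝ → Xi} {ξ' : Xi} {θ : ℝ → ℝ} {θ' s : ℝ}
    (hψ : DifferentiableAt ℝ (fun p : Xi × ℝ => ψ p.1 p.2) (ξ s, θ s))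
    (hξ : HasDerivAt ξ ξ' s) (hθ : HasDerivAt θ θ' s) :
    HasDerivAt (fun u => ψ (ξ u) (θ u))
      (∑ B, dXi B ψ (ξ s) (θ s) * xiComp ξ' B + dTh ψ (ξ s) (θ s) * θ') s := by
  refine (hψ.hasFDerivAt.comp_hasDerivAt s (hξ.prodMk hθ)).congr_deriv ?_
  have hcoord : (ξ', θ') = ∑ B, xiComp ξ' B • (xiUnit B, (0 : ℝ)) + θ' • ((0 : Xi), (1 : ℝ)) := by
    ext1 <;> simp [-Fintype.sum_sum_type, Prod.fst_sum, Prod.snd_sum, sum_xiComp_smul_xiUnit]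
  rw [hcoord, map_add, map_sum]
  simp only [map_smul, smul_eq_mul, dXi_eq_fderiv hψ, dTh_eq_fderiv hψ, mul_comm]

end ConstitutiveFunctions

section Fields

/-- Differentiability of a space-time field at the point `(x, t)`, jointly in space and time. -/
abbrev FieldDiffAt {E : Type*} [NormedAddCommGroup E] [NormedSpace ℝ E]
    (f : Vec3 → ℝ → E) (x : Vec3) (t : ℝ) : Prop :=
  DifferentiableAt ℝ (fun p : Vec3 × ℝ => f p.1 p.2) (x, t)

variable {x : Vec3} {t : ℝ}

namespace FieldDiffAt

variable {E : Type*} [NormedAddCommGroup E] [NormedSpace ℝ E]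

lemma differentiableAt_time {f : Vec3 → ℝ → E} (hf : FieldDiffAt f x t) :
    DifferentiableAt ℝ (f x) t :=
  hf.comp t ((differentiableAt_const x).prodMk differentiableAt_id)

lemma differentiableAt_space {f : Vec3 → ℝ → E} (hf : FieldDiffAt f x t) (α : Fin 3) :
    DifferentiableAt ℝ (fun s => f (Function.update x α s) t) (x α) := by
  have hline := (hasDerivAt_update x α (x α)).differentiableAt.prodMk (differentiableAt_const t)
  have hf' : DifferentiableAt ℝ (fun p : Vec3 × ℝ => f p.1 p.2)
      (Function.update x α (x α), t) := by rwa [Function.update_eq_self]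
  exact DifferentiableAt.comp (x α) hf' hline

lemma hasDerivAt_pdt {f : Vec3 → ℝ → ℝ} (hf : FieldDiffAt f x t) :
    HasDerivAt (f x) (pdt f x t) t :=
  hf.differentiableAt_time.hasDerivAt

lemma hasDerivAt_pdx {f : Vec3 → ℝ → ℝ} (hf : FieldDiffAt f x t) (α : Fin 3) :
    HasDerivAt (fun s => f (Function.update x α s) t) (pdx α f x t) (x α) :=
  (hf.differentiableAt_space α).hasDerivAt

lemma entry {F : Vec3 → ℝ → Mat3} (hF : FieldDiffAt F x t) (i α : Fin 3) :
    FieldDiffAt (fun y s => F y s i α) x t :=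
  differentiableAt_pi.1 (differentiableAt_pi.1 hF i) α

lemma component {v : Vec3 → ℝ → Vec3} (hv : FieldDiffAt v x t) (i : Fin 3) :
    FieldDiffAt (fun y s => v y s i) x t :=
  differentiableAt_pi.1 hv i

lemma constitutive {g : Xi → ℝ → ℝ} {ξf : Vec3 → ℝ → Xi} {θf : Vec3 → ℝ → ℝ}
    (hg : DifferentiableAt ℝ (fun p : Xi × ℝ => g p.1 p.2) (ξf x t, θf x t))
    (hξ : FieldDiffAt ξf x t) (hθ : FieldDiffAt θf x t) :
    FieldDiffAt (fun y s => g (ξf y s) (θf y s)) x t :=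
  DifferentiableAt.comp (x, t) (g := fun p : Xi × ℝ => g p.1 p.2) hg (hξ.prodMk hθ)

lemma dPhi {F : Vec3 → ℝ → Mat3} (hF : FieldDiffAt F x t) (B : Idx) (i α : Fin 3) :
    FieldDiffAt (fun y s => dPhi B i α (F y s)) x t :=
  (differentiable_dPhi B i α _).comp (x, t) hF

end FieldDiffAt

lemma sum_pdx_sum_mul {T : Fin 3 → Fin 3 → Vec3 → ℝ → ℝ} {v : Vec3 → ℝ → Vec3}
    (hT : ∀ i α, FieldDiffAt (T i α) x t) (hv : FieldDiffAt v x t) :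
    ∑ α, pdx α (fun y s => ∑ i, T i α y s * v y s i) x t =
      ∑ i, (∑ α, pdx α (T i α) x t) * v x t i +
        ∑ i, ∑ α, T i α x t * pdx α (fun y s => v y s i) x t := by
  have hline (α : Fin 3) : pdx α (fun y s => ∑ i, T i α y s * v y s i) x t =
      ∑ i, (pdx α (T i α) x t * v x t i + T i α x t * pdx α (fun y s => v y s i) x t) := by
    have h := HasDerivAt.fun_sum (u := Finset.univ) fun i _ =>
      ((hT i α).hasDerivAt_pdx α).mul ((hv.component i).hasDerivAt_pdx α)
    simp only [Function.update_eq_self] at h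
    exact h.deriv
  simp only [hline, Finset.sum_add_distrib, Finset.sum_mul]
  rw [Finset.sum_comm, Finset.sum_comm (f := fun α i => T i α x t * _)]

lemma pdx_div {f g : Vec3 → ℝ → ℝ} (hf : FieldDiffAt f x t) (hg : FieldDiffAt g x t)
    (hg0 : g x t ≠ 0) (α : Fin 3) :
    pdx α (fun y s => f y s / g y s) x t =
      pdx α f x t / g x t - pdx α g x t * f x t / g x t ^ 2 := by
  have h := (hf.hasDerivAt_pdx α).div (hg.hasDerivAt_pdx α)
    (by rwa [Function.update_eq_self])
  simp only [Function.update_eq_self] at h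
  refine h.deriv.trans ?_
  field_simp

lemma hasDerivAt_half_sum_sq {v : Vec3 → ℝ → Vec3} (hv : FieldDiffAt v x t) :
    HasDerivAt (fun s => (1 / 2) * ∑ i, v x s i ^ 2)
      (∑ i, pdt (fun y s => v y s i) x t * v x t i) t := by
  refine ((HasDerivAt.fun_sum fun i _ =>
    (hv.component i).hasDerivAt_pdt.pow 2).const_mul (1 / 2 : ℝ)).congr_deriv ?_
  rw [Finset.mul_sum]
  refine Finset.sum_congr rfl fun i _ => ?_
  push_cast
  ring

lemma sum_pdx_dPhi_eq_zero {F : Vec3 → ℝ → Mat3} (hF : FieldDiffAt F x t)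
    (hcurl : ∀ i α β,
      pdx α (fun y s => F y s i β) x t = pdx β (fun y s => F y s i α) x t)
    (B : Idx) (i : Fin 3) : ∑ α, pdx α (fun y s => dPhi B i α (F y s)) x t = 0 := by
  let G (α : Fin 3) : Mat3 := fun k γ => pdx α (fun y s => F y s k γ) x t
  have hG (α : Fin 3) : HasDerivAt (fun s => F (Function.update x α s) t) (G α) (x α) :=
    hasDerivAt_pi.2 fun k => hasDerivAt_pi.2 fun γ => (hF.entry k γ).hasDerivAt_pdx α
  have hdPhi (α : Fin 3) : pdx α (fun y s => dPhi B i α (F y s)) x t =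
      xiCompL B (Phi3Hess (F x t) (G α) (matUnit i α)) := by
    have h := (hasDerivAt_dPhi (hG α) B i α).deriv
    rwa [Function.update_eq_self] at h
  simp only [hdPhi]
  rw [← map_sum, sum_Phi3Hess_matUnit_eq_zero _ hcurl, map_zero]

end Fields

section EntropyProduction

variable {ψ : Xi → ℝ → ℝ} {ξf : Vec3 → ℝ → Xi} {vf : Vec3 → ℝ → Vec3} {θf : Vec3 → ℝ → ℝ}
  {Z : Vec3 → ℝ → Mat3} {Q : Vec3 → ℝ → Vec3} {r : Vec3 → ℝ → ℝ} {x : Vec3} {t : ℝ}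

/-- The Gibbs relation. -/
lemma hasDerivAt_eHat (hψ : ContDiffAt ℝ 2 (fun p : Xi × ℝ => ψ p.1 p.2) (ξf x t, θf x t))
    (hξ : FieldDiffAt ξf x t) (hθ : FieldDiffAt θf x t) :
    HasDerivAt (fun s => eHat ψ (ξf x s) (θf x s))
      (∑ B, dXi B ψ (ξf x t) (θf x t) * pdt (fun y s => xiComp (ξf y s) B) x t +
        θf x t * pdt (fun y s => etaHat ψ (ξf y s) (θf y s)) x t) t := by
  have hdTh : FieldDiffAt (fun y s => dTh ψ (ξf y s) (θf y s)) x t :=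
    .constitutive (differentiableAt_dTh hψ) hξ hθ
  have hξt := hξ.differentiableAt_time.hasDerivAt
  have hξB (B : Idx) : pdt (fun y s => xiComp (ξf y s) B) x t = xiComp (deriv (ξf x) t) B :=
    (hasDerivAt_xiComp hξt B).deriv
  have hη : pdt (fun y s => etaHat ψ (ξf y s) (θf y s)) x t =
      -pdt (fun y s => dTh ψ (ξf y s) (θf y s)) x t :=
    hdTh.hasDerivAt_pdt.neg.deriv
  have hψt := hasDerivAt_constitutive (hψ.differentiableAt two_ne_zero) hξt hθ.hasDerivAt_pdt
  refine (hψt.sub (hθ.hasDerivAt_pdt.mul hdTh.hasDerivAt_pdt)).congr_deriv ?_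
  simp only [hξB, hη]
  ring

/-- `∂_t ξ = DΦ(F)∇v`: the Piola identity removes the derivatives of `∂Φ/∂F`. -/
lemma AugSys.pdt_xiComp (hsys : AugSys ψ ξf vf θf Z Q r x t)
    (hξ : FieldDiffAt ξf x t) (hv : FieldDiffAt vf x t) (B : Idx) :
    pdt (fun y s => xiComp (ξf y s) B) x t =
      ∑ i, ∑ α, dPhi B i α (ξf x t).1 * pdx α (fun y s => vf y s i) x t := by
  have hF : FieldDiffAt (fun y s => (ξf y s).1) x t := hξ.fst
  rw [hsys.1 B, sum_pdx_sum_mul (hF.dPhi B) hv]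
  simp only [sum_pdx_dPhi_eq_zero hF hsys.2.2.2, zero_mul, Finset.sum_const_zero, zero_add]

lemma AugSys.sum_dXi_mul_pdt_xiComp (hsys : AugSys ψ ξf vf θf Z Q r x t)
    (hξ : FieldDiffAt ξf x t) (hv : FieldDiffAt vf x t) :
    ∑ B, dXi B ψ (ξf x t) (θf x t) * pdt (fun y s => xiComp (ξf y s) B) x t =
      ∑ i, ∑ α, SigmaA ψ (ξf x t) (θf x t) i α * pdx α (fun y s => vf y s i) x t := by
  simp only [hsys.pdt_xiComp hξ hv, SigmaA, Finset.mul_sum, Finset.sum_mul, mul_assoc]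
  exact Finset.sum_comm_cycle.symm

lemma fieldDiffAt_SigmaA (hψ : ContDiffAt ℝ 2 (fun p : Xi × ℝ => ψ p.1 p.2) (ξf x t, θf x t))
    (hξ : FieldDiffAt ξf x t) (hθ : FieldDiffAt θf x t) (i α : Fin 3) :
    FieldDiffAt (fun y s => SigmaA ψ (ξf y s) (θf y s) i α) x t := by
  have hF : FieldDiffAt (fun y s => (ξf y s).1) x t := hξ.fst
  exact DifferentiableAt.fun_sum fun B _ =>
    (FieldDiffAt.constitutive (differentiableAt_dXi hψ B) hξ hθ).mul (hF.dPhi B i α)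

lemma AugSys.temperature_mul_pdt_etaHat (hsys : AugSys ψ ξf vf θf Z Q r x t)
    (hψ : ContDiffAt ℝ 2 (fun p : Xi × ℝ => ψ p.1 p.2) (ξf x t, θf x t))
    (hξ : FieldDiffAt ξf x t) (hv : FieldDiffAt vf x t) (hθ : FieldDiffAt θf x t)
    (hZ : FieldDiffAt Z x t) :
    θf x t * pdt (fun y s => etaHat ψ (ξf y s) (θf y s)) x t =
      ∑ i, ∑ α, Z x t i α * pdx α (fun y s => vf y s i) x t +
        ∑ α, pdx α (fun y s => Q y s α) x t + r x t := by
  have hpower := hsys.sum_dXi_mul_pdt_xiComp hξ hv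
  obtain ⟨-, hmomentum, henergy, -⟩ := hsys
  have hrate := ((hasDerivAt_half_sum_sq hv).add (hasDerivAt_eHat hψ hξ hθ)).deriv
  have hkinetic : ∑ i, pdt (fun y s => vf y s i) x t * vf x t i =
      ∑ i, (∑ α, pdx α (fun y s => SigmaA ψ (ξf y s) (θf y s) i α) x t) * vf x t i +
        ∑ i, (∑ α, pdx α (fun y s => Z y s i α) x t) * vf x t i := by
    rw [← Finset.sum_add_distrib]
    exact Finset.sum_congr rfl fun i _ => by rw [hmomentum i, add_mul]; rfl
  have hstress := sum_pdx_sum_mul (fieldDiffAt_SigmaA hψ hξ hθ) hv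
  have hviscous := sum_pdx_sum_mul hZ.entry hv
  have hbalance := hrate.symm.trans henergy
  simp only [SigmaA] at hpower hkinetic hstress
  linarith

theorem entropy_conservation_augmented_adiabatic_general
    (hsys : AugSys ψ ξf vf θf Z Q r x t)
    (hψ : ContDiffAt ℝ 2 (fun p : Xi × ℝ => ψ p.1 p.2) (ξf x t, θf x t))
    (hξ : FieldDiffAt ξf x t) (hv : FieldDiffAt vf x t) (hθ : FieldDiffAt θf x t)
    (hZ : FieldDiffAt Z x t) (hQ : FieldDiffAt Q x t) (hθ0 : θf x t ≠ 0) :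
    EntropyIdent ψ ξf vf θf Z Q r x t := by
  have hbalance := hsys.temperature_mul_pdt_etaHat hψ hξ hv hθ hZ
  have hflux := fun α => pdx_div (hQ.component α) hθ hθ0 α
  simp only [EntropyIdent, hflux, Finset.sum_sub_distrib, ← Finset.sum_div]
  rw [Finset.sum_comm (f := fun α i => pdx α (fun y s => vf y s i) x t * Z x t i α)]
  simp only [mul_comm (pdx _ _ _ _) (Z x t _ _)]
  field_simp
  linear_combination θf x t * hbalance

end EntropyProduction

/-- entropy conservation law for the augmented adiabatic
thermoelasticity system: any C² solution (ξ,v,θ) with θ > 0 of the augmented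
system with heat supply r satisfies ∂_t η̂(ξ,θ) = r/θ pointwise. -/
theorem entropy_conservation_augmented_adiabatic
    (ψ : Xi → ℝ → ℝ)
    (hψ : ContDiffOn ℝ 2 (fun p : Xi × ℝ => ψ p.1 p.2) (Set.univ ×ˢ Set.Ioi (0:ℝ)))
    (ξf : Vec3 → ℝ → Xi) (vf : Vec3 → ℝ → Vec3) (θf : Vec3 → ℝ → ℝ)
    (r : Vec3 → ℝ → ℝ)
    (hξreg : FieldC 2 ξf) (hvreg : FieldC 2 vf) (hθreg : FieldC 2 θf)
    (hrcont : Continuous (fun p : Vec3 × ℝ => r p.1 p.2))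
    (hθpos : ∀ (x : Vec3) (t : ℝ), 0 < t → 0 < θf x t)
    (hsys : ∀ (x : Vec3) (t : ℝ), 0 < t →
      AugSys ψ ξf vf θf (fun _ _ => 0) (fun _ _ => 0) r x t) :
    ∀ (x : Vec3) (t : ℝ), 0 < t →
      pdt (fun z s => etaHat ψ (ξf z s) (θf z s)) x t = r x t / θf x t := by
  intro x t ht
  have hψt : ContDiffAt ℝ 2 (fun p : Xi × ℝ => ψ p.1 p.2) (ξf x t, θf x t) :=
    hψ.contDiffAt ((isOpen_univ.prod isOpen_Ioi).mem_nhds ⟨trivial, hθpos x t ht⟩)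
  simpa [EntropyIdent, pdx] using entropy_conservation_augmented_adiabatic_general (hsys x t ht)
    hψt (hξreg.differentiable two_ne_zero _) (hvreg.differentiable two_ne_zero _)
    (hθreg.differentiable two_ne_zero _) (differentiableAt_const _) (differentiableAt_const _)
    (hθpos x t ht).ne'

end
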